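/- arXiv:1003.5615 — 4 statements merged into one kernel-verified Lean document; each statement's English description precedes it below -/
import Mathlib

section
/- Let k > 0 and let s ≥ 0 be a real number that is not a positive integer. Define g(r) := ( Γ(1+s)·Γ(1−s) / (4π) ) · cos(√k·r/2) · ₂F₁(1 + s, 1 − s, 2; cos²(√k·r/2)) for r ∈ (0, π/√k). Then lim_{r → 0⁺} g(r) / log(1/r) = 1/(2π). -/
open Real Set Filter Topology

/-!
The coefficients of `₂F₁ a b (a + b)` are asymptotic to `Γ(a + b) / (Γ(a) Γ(b))` times those of
`-log (1 - x) = ∑ xⁿ / n`, by Euler's limit formula for `Γ`. Since the latter series has nonnegative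
coefficients and diverges at `1`, an Abelian theorem carries this asymptotic over to the sums
as `x → 1⁻`. Taking `a = 1 + s`, `b = 1 - s` and `x = cos² (√k r / 2)`, the pole comes from
`-log (sin² (√k r / 2)) ∼ 2 log (1 / r)`.
-/

open Asymptotics

section AbelianTheorem

variable {g : ℕ → ℝ}

theorem isLittleO_tsum_pow_smul {E : Type*} [NormedAddCommGroup E] [NormedSpace ℝ E] {f : ℕ → E}
    (hg : ∀ n, 0 ≤ g n) (hsum : ∀ x ∈ Ioo (0 : ℝ) 1, Summable fun n => g n * x ^ n)
    (hdiv : Tendsto (fun x : ℝ => ∑' n, g n * x ^ n) (𝓝[<] 1) atTop) (hfg : f =o[atTop] g) :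
    (fun x : ℝ => ∑' n, x ^ n • f n) =o[𝓝[<] 1] fun x => ∑' n, g n * x ^ n := by
  refine isLittleO_iff.mpr fun ε hε => ?_
  obtain ⟨N, hN⟩ := eventually_atTop.mp (hfg.bound (half_pos hε))
  set C := ∑ n ∈ Finset.range N, ‖f n‖
  filter_upwards [Ioo_mem_nhdsLT one_pos, hdiv.eventually_ge_atTop (C / (ε / 2))] with x hx hlarge
  have hterm (n : ℕ) :
      ‖x ^ n • f n‖ ≤ ε / 2 * (g n * x ^ n) + (Finset.range N : Set ℕ).indicator (‖f ·‖) n := by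
    have hpow : 0 ≤ x ^ n := pow_nonneg hx.1.le n
    rw [norm_smul, norm_of_nonneg hpow]
    by_cases hn : n < N
    · rw [indicator_of_mem (by simpa using hn)]
      have hhead := mul_le_of_le_one_left (norm_nonneg (f n)) (pow_le_one₀ hx.1.le hx.2.le (n := n))
      have := mul_nonneg (half_pos hε).le (mul_nonneg (hg n) hpow)
      linarith
    · rw [indicator_of_notMem (by simpa using hn), add_zero, mul_comm, ← mul_assoc]
      have htail := hN n (not_lt.mp hn)
      rw [norm_of_nonneg (hg n)] at htail
      gcongr
  have hbound : HasSum
      (fun n => ε / 2 * (g n * x ^ n) + (Finset.range N : Set ℕ).indicator (‖f ·‖) n)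
      (ε / 2 * ∑' n, g n * x ^ n + C) :=
    ((hsum x hx).hasSum.mul_left _).add (hasSum_subtype_iff_indicator.mp (Finset.hasSum _ _))
  rw [div_le_iff₀' (half_pos hε)] at hlarge
  calc ‖∑' n, x ^ n • f n‖ ≤ ε / 2 * ∑' n, g n * x ^ n + C := tsum_of_norm_bounded hbound hterm
    _ ≤ ε * ∑' n, g n * x ^ n := by linarith
    _ ≤ ε * ‖∑' n, g n * x ^ n‖ := by gcongr; exact le_norm_self _

theorem tendsto_tsum_mul_pow_div {f : ℕ → ℝ} {L : ℝ}
    (hg : ∀ n, 0 ≤ g n) (hg0 : ∀ᶠ n in atTop, g n ≠ 0)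
    (hsum : ∀ x ∈ Ioo (0 : ℝ) 1, Summable fun n => g n * x ^ n)
    (hdiv : Tendsto (fun x : ℝ => ∑' n, g n * x ^ n) (𝓝[<] 1) atTop)
    (hfg : Tendsto (fun n => f n / g n) atTop (𝓝 L)) :
    Tendsto (fun x : ℝ => (∑' n, f n * x ^ n) / ∑' n, g n * x ^ n) (𝓝[<] 1) (𝓝 L) := by
  have hrem : (fun n => f n - L * g n) =o[atTop] g := by
    refine (isLittleO_iff_tendsto' (hg0.mono fun n hn h => absurd h hn)).mpr ?_
    refine (sub_self L ▸ hfg.sub_const L).congr' ?_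
    filter_upwards [hg0] with n hn
    rw [sub_div, mul_div_cancel_right₀ _ hn]
  have hlim := (isLittleO_tsum_pow_smul hg hsum hdiv hrem).tendsto_div_nhds_zero.add_const L
  rw [zero_add] at hlim
  refine hlim.congr' ?_
  filter_upwards [Ioo_mem_nhdsLT one_pos, hdiv.eventually_ne_atTop 0] with x hx hne
  have hrem_sum : Summable fun n => (f n - L * g n) * x ^ n :=
    summable_of_isBigO_nat (hsum x hx) (hrem.isBigO.mul (isBigO_refl _ _))
  have hsplit : ∑' n, f n * x ^ n =
      ∑' n, (f n - L * g n) * x ^ n + L * ∑' n, g n * x ^ n := by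
    rw [← tsum_mul_left, ← hrem_sum.tsum_add ((hsum x hx).mul_left L)]
    exact tsum_congr fun n => by ring
  simp only [smul_eq_mul, mul_comm (x ^ _), hsplit, add_div, mul_div_cancel_right₀ _ hne]

end AbelianTheorem

section Coefficients

theorem ascPochhammer_eval_eq_prod_range {S : Type*} [CommSemiring S] (n : ℕ) (x : S) :
    (ascPochhammer S n).eval x = ∏ j ∈ Finset.range n, (x + j) := by
  induction n with
  | zero => simp
  | succ n ih => rw [ascPochhammer_succ_eval, ih, Finset.prod_range_succ]

/-- At the poles of `Γ` this reads `0 → 0`, by `x / 0 = 0` and `Gamma (-m) = 0`. -/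
theorem tendsto_rpow_mul_factorial_div_ascPochhammer (a : ℝ) :
    Tendsto (fun n : ℕ => (n : ℝ) ^ (a - 1) * n.factorial / (ascPochhammer ℝ n).eval a)
      atTop (𝓝 (Gamma a)) := by
  have hratio := (tendsto_natCast_div_add_atTop a).inv₀ one_ne_zero
  have hlim := (GammaSeq_tendsto_Gamma a).mul hratio
  rw [inv_one, mul_one] at hlim
  refine hlim.congr' ?_
  filter_upwards [eventually_gt_atTop 0,
    tendsto_natCast_atTop_atTop.eventually_gt_atTop (-a)] with n hn han
  have hn' : (0 : ℝ) < n := Nat.cast_pos.mpr hn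
  have han' : a + n ≠ 0 := by linarith
  rw [GammaSeq, Finset.prod_range_succ, ← ascPochhammer_eval_eq_prod_range, rpow_sub_one hn'.ne',
    inv_div, add_comm (n : ℝ) a]
  field_simp

theorem tendsto_rpow_mul_ordinaryHypergeometricCoefficient {a b : ℝ} (c : ℝ)
    (ha : Gamma a ≠ 0) (hb : Gamma b ≠ 0) :
    Tendsto (fun n : ℕ => (n : ℝ) ^ (c + 1 - a - b) * ordinaryHypergeometricCoefficient a b c n)
      atTop (𝓝 (Gamma c / (Gamma a * Gamma b))) := by
  refine ((tendsto_rpow_mul_factorial_div_ascPochhammer c).div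
    ((tendsto_rpow_mul_factorial_div_ascPochhammer a).mul
      (tendsto_rpow_mul_factorial_div_ascPochhammer b)) (mul_ne_zero ha hb)).congr' ?_
  filter_upwards [eventually_gt_atTop 0] with n hn
  have hn' : (0 : ℝ) < n := Nat.cast_pos.mpr hn
  have hpow : (n : ℝ) ^ (c + 1 - a - b) = n ^ (c - 1) / (n ^ (a - 1) * n ^ (b - 1)) := by
    rw [← rpow_add hn', ← rpow_sub hn']
    ring_nf
  have hfact : (n.factorial : ℝ) ≠ 0 := Nat.cast_ne_zero.mpr n.factorial_ne_zero
  rw [hpow, ordinaryHypergeometricCoefficient]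
  simp only [Pi.div_apply]
  field_simp

end Coefficients

section LogarithmicSingularity

theorem hasSum_inv_mul_pow_neg_log {x : ℝ} (hx : |x| < 1) :
    HasSum (fun n : ℕ => (n : ℝ)⁻¹ * x ^ n) (-log (1 - x)) := by
  refine (hasSum_nat_add_iff' 1).mp ?_
  simpa [div_eq_inv_mul] using hasSum_pow_div_log_of_abs_lt_one hx

theorem tendsto_neg_log_one_sub_atTop :
    Tendsto (fun x : ℝ => -log (1 - x)) (𝓝[<] 1) atTop := by
  refine tendsto_neg_atBot_atTop.comp (tendsto_log_nhdsGT_zero.comp ?_)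
  refine tendsto_nhdsWithin_iff.mpr ⟨?_, ?_⟩
  · exact Continuous.tendsto' (by fun_prop) _ _ (sub_self 1) |>.mono_left nhdsWithin_le_nhds
  · filter_upwards [self_mem_nhdsWithin] with x hx using sub_pos.mpr (mem_Iio.mp hx)

theorem tendsto_ordinaryHypergeometric_div_neg_log {a b : ℝ}
    (ha : Gamma a ≠ 0) (hb : Gamma b ≠ 0) :
    Tendsto (fun x : ℝ => ₂F₁ a b (a + b) x / -log (1 - x)) (𝓝[<] 1)
      (𝓝 (Gamma (a + b) / (Gamma a * Gamma b))) := by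
  have hlog (x : ℝ) (hx : x ∈ Ioo (0 : ℝ) 1) := hasSum_inv_mul_pow_neg_log (abs_lt.mpr
    ⟨by linarith [hx.1], hx.2⟩)
  have hlog_eq : (fun x : ℝ => -log (1 - x)) =ᶠ[𝓝[<] 1] fun x => ∑' n : ℕ, (n : ℝ)⁻¹ * x ^ n := by
    filter_upwards [Ioo_mem_nhdsLT one_pos] with x hx using (hlog x hx).tsum_eq.symm
  have hcoeff : Tendsto
      (fun n : ℕ => ordinaryHypergeometricCoefficient a b (a + b) n / (n : ℝ)⁻¹) atTop
      (𝓝 (Gamma (a + b) / (Gamma a * Gamma b))) := by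
    have hexp : a + b + 1 - a - b = 1 := by ring
    simpa only [hexp, rpow_one, div_inv_eq_mul, mul_comm (Nat.cast _ : ℝ)] using
      tendsto_rpow_mul_ordinaryHypergeometricCoefficient (a + b) ha hb
  refine (tendsto_tsum_mul_pow_div (fun n => by positivity) ?_ (fun x hx => (hlog x hx).summable)
    (tendsto_neg_log_one_sub_atTop.congr' hlog_eq) hcoeff).congr' ?_
  · filter_upwards [eventually_ne_atTop 0] with n hn using inv_ne_zero (Nat.cast_ne_zero.mpr hn)
  · filter_upwards [hlog_eq] with x hx
    simp only [ordinaryHypergeometric_eq_tsum, smul_eq_mul, hx]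

end LogarithmicSingularity

section CosineSubstitution

variable {c : ℝ}

theorem isEquivalent_sin_mul (c : ℝ) : (fun r : ℝ => sin (c * r)) ~[𝓝 0] fun r => c * r :=
  isEquivalent_sin.comp_tendsto (Continuous.tendsto' (by fun_prop) _ _ (mul_zero c))

theorem tendsto_cos_mul_one (c : ℝ) : Tendsto (fun r : ℝ => cos (c * r)) (𝓝[≠] 0) (𝓝 1) :=
  (Continuous.tendsto' (by fun_prop) _ _ (by simp)).mono_left nhdsWithin_le_nhds

theorem tendsto_cos_mul_sq_nhdsLT_one (hc : c ≠ 0) :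
    Tendsto (fun r : ℝ => cos (c * r) ^ 2) (𝓝[≠] 0) (𝓝[<] 1) := by
  refine tendsto_nhdsWithin_iff.mpr ⟨by simpa using (tendsto_cos_mul_one c).pow 2, ?_⟩
  filter_upwards [self_mem_nhdsWithin,
    (isEquivalent_sin_mul c).isTheta.eq_zero_iff.filter_mono nhdsWithin_le_nhds] with r hr hsin
  have hsin_sq : 0 < sin (c * r) ^ 2 := sq_pos_of_ne_zero (hsin.not.mpr (mul_ne_zero hc hr))
  exact mem_Iio.mpr (by linarith [sin_sq_add_cos_sq (c * r)])

theorem tendsto_inv_mul_sq_atTop (hc : c ≠ 0) :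
    Tendsto (fun r : ℝ => ((c * r) ^ 2)⁻¹) (𝓝[≠] 0) atTop := by
  refine tendsto_inv_nhdsGT_zero.comp (tendsto_nhdsWithin_iff.mpr ⟨?_, ?_⟩)
  · exact (Continuous.tendsto' (by fun_prop) _ _ (by simp)).mono_left nhdsWithin_le_nhds
  · filter_upwards [self_mem_nhdsWithin] with r hr using sq_pos_of_ne_zero (mul_ne_zero hc hr)

theorem tendsto_log_one_div_atTop : Tendsto (fun r : ℝ => log (1 / r)) (𝓝[≠] 0) atTop := by
  simp only [one_div, log_inv]
  exact tendsto_neg_atBot_atTop.comp tendsto_log_nhdsNE_zero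

theorem isEquivalent_neg_log_one_sub_cos_sq (hc : c ≠ 0) :
    (fun r : ℝ => -log (1 - cos (c * r) ^ 2)) ~[𝓝[≠] 0] fun r => 2 * log (1 / r) := by
  have hsin : (fun r : ℝ => (sin (c * r) ^ 2)⁻¹) ~[𝓝[≠] 0] fun r => ((c * r) ^ 2)⁻¹ :=
    (((isEquivalent_sin_mul c).mono nhdsWithin_le_nhds).pow 2).inv
  have hlog := tendsto_log_one_div_atTop.const_mul_atTop (two_pos (α := ℝ))
  have hscale : (fun r : ℝ => log ((c * r) ^ 2)⁻¹) =ᶠ[𝓝[≠] 0]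
      fun r => -(2 * log c) + 2 * log (1 / r) := by
    filter_upwards [self_mem_nhdsWithin] with r hr
    rw [log_inv, log_pow, log_mul hc hr, one_div, log_inv]
    push_cast
    ring
  calc (fun r : ℝ => -log (1 - cos (c * r) ^ 2))
      = fun r => log (sin (c * r) ^ 2)⁻¹ := by simp only [← sin_sq, log_inv]
    _ ~[𝓝[≠] 0] fun r => log ((c * r) ^ 2)⁻¹ := hsin.log (tendsto_inv_mul_sq_atTop hc)
    _ =ᶠ[𝓝[≠] 0] fun r => -(2 * log c) + 2 * log (1 / r) := hscale
    _ ~[𝓝[≠] 0] fun r => 2 * log (1 / r) :=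
      IsEquivalent.refl.const_add_of_norm_tendsto_atTop (tendsto_norm_atTop_atTop.comp hlog)

theorem tendsto_ordinaryHypergeometric_cos_sq_div_log {a b : ℝ} (hc : c ≠ 0)
    (ha : Gamma a ≠ 0) (hb : Gamma b ≠ 0) :
    Tendsto (fun r : ℝ => ₂F₁ a b (a + b) (cos (c * r) ^ 2) / log (1 / r)) (𝓝[≠] 0)
      (𝓝 (2 * (Gamma (a + b) / (Gamma a * Gamma b)))) := by
  have hcos := tendsto_cos_mul_sq_nhdsLT_one hc
  have hF := (tendsto_ordinaryHypergeometric_div_neg_log ha hb).comp hcos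
  have hlog_ne := (tendsto_neg_log_one_sub_atTop.comp hcos).eventually_ne_atTop 0
  have hlog : Tendsto (fun r : ℝ => -log (1 - cos (c * r) ^ 2) / log (1 / r)) (𝓝[≠] 0) (𝓝 2) := by
    refine (((isEquivalent_neg_log_one_sub_cos_sq hc).div .refl).trans_eventuallyEq
      (g₂ := Function.const ℝ 2) ?_).tendsto_const
    filter_upwards [tendsto_log_one_div_atTop.eventually_ne_atTop 0] with r hr
      using mul_div_cancel_right₀ 2 hr
  rw [mul_comm]
  refine (hF.mul hlog).congr' ?_
  filter_upwards [hlog_ne] with r hne using div_mul_div_cancel₀ hne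

end CosineSubstitution

theorem green_function_log_pole_general (k : ℝ) (hk : 0 < k) (s : ℝ)
    (hns : ∀ m : ℤ, m ≠ 0 → s ≠ m)
    (g : ℝ → ℝ)
    (hg : ∀ r ∈ Ioo 0 (π / Real.sqrt k),
      g r = (Real.Gamma (1 + s) * Real.Gamma (1 - s) / (4 * π)) *
        Real.cos (Real.sqrt k * r / 2) *
        ₂F₁ (1 + s) (1 - s) (2 : ℝ) (Real.cos (Real.sqrt k * r / 2) ^ 2)) :
    Tendsto (fun r : ℝ => g r / Real.log (1 / r)) (𝓝[>] (0 : ℝ))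
      (𝓝 (1 / (2 * π))) := by
  have hsqrt : 0 < √k := sqrt_pos.mpr hk
  have hGamma_add : Gamma (1 + s) ≠ 0 := Gamma_ne_zero fun m h =>
    hns (-(m + 1)) (by lia) (by push_cast; linarith)
  have hGamma_sub : Gamma (1 - s) ≠ 0 := Gamma_ne_zero fun m h =>
    hns (m + 1) (by lia) (by push_cast; linarith)
  have hparam : 1 + s + (1 - s) = 2 := by ring
  have hF := tendsto_ordinaryHypergeometric_cos_sq_div_log (half_pos hsqrt).ne'
    hGamma_add hGamma_sub
  rw [hparam, Gamma_two] at hF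
  have hlim := (((tendsto_cos_mul_one (√k / 2)).const_mul
    (Gamma (1 + s) * Gamma (1 - s) / (4 * π))).mul hF).mono_left (nhdsGT_le_nhdsNE 0)
  have hconst : Gamma (1 + s) * Gamma (1 - s) / (4 * π) * 1 *
      (2 * (1 / (Gamma (1 + s) * Gamma (1 - s)))) = 1 / (2 * π) := by
    field_simp
    norm_num
  rw [hconst] at hlim
  refine hlim.congr' ?_
  filter_upwards [Ioo_mem_nhdsGT (div_pos pi_pos hsqrt)] with r hr
  rw [hg r hr, mul_div_right_comm √k r 2, ← mul_div_assoc]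

theorem green_function_log_pole (k : ℝ) (hk : 0 < k) (s : ℝ) (hs : 0 ≤ s)
    (hns : ∀ m : ℕ, 0 < m → s ≠ m)
    (g : ℝ → ℝ)
    (hg : ∀ r ∈ Ioo 0 (π / Real.sqrt k),
      g r = (Real.Gamma (1 + s) * Real.Gamma (1 - s) / (4 * π)) *
        Real.cos (Real.sqrt k * r / 2) *
        ₂F₁ (1 + s) (1 - s) (2 : ℝ) (Real.cos (Real.sqrt k * r / 2) ^ 2)) :
    Tendsto (fun r : ℝ => g r / Real.log (1 / r)) (𝓝[>] (0 : ℝ))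
      (𝓝 (1 / (2 * π))) := by
  refine green_function_log_pole_general k hk s (fun m hm h => ?_) g hg
  lift m to ℕ using by exact_mod_cast h ▸ hs
  exact hns m (by lia) (by exact_mod_cast h)
end

section
/- Let n ≥ 2 be an integer and k > 0, and let f : ℝ → ℝ be a smooth function whose (compact) support is contained in the open interval (0, π/√k). Then ∫₀^{π/√k} (T_M f)(r)·f(r)·m(r) dr ≤ 0, i.e. the operator −T_M is nonnegative on compactly supported smooth functions with respect to the radial measure dμ = m(r)dr. -/
open Real Set MeasureTheory

/-- The radial operator `T_M` on the sphere of curvature `k > 0` in dimension `n`. -/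
noncomputable def radialOp (n : ℕ) (k : ℝ) (f : ℝ → ℝ) (r : ℝ) : ℝ :=
  deriv (deriv f) r + ((n : ℝ) - 1) * Real.sqrt k * Real.cot (Real.sqrt k * r) * deriv f r
    - k * ((n : ℝ) - 1) / 4 * ((Real.cos (Real.sqrt k * r / 2))⁻¹ ^ 2 + (n : ℝ) - 1) * f r

/-- The density of the radial measure `dμ = m(r) dr`. -/
noncomputable def radialDensity (n : ℕ) (k : ℝ) (r : ℝ) : ℝ :=
  (Real.sin (Real.sqrt k * r) / Real.sqrt k) ^ (n - 1)

/-!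
Since `m' = (n - 1) √k cot(√k r) m`, the operator has the Sturm–Liouville form
`m T_M f = (m f')' - V m f` with a potential `V ≥ 0`. The weight `m` vanishes at both endpoints,
so integrating by parts against `f` leaves no boundary term and
`∫ (T_M f) f m = -∫ (f'² + V f²) m ≤ 0`.
-/

/-- The zeroth-order coefficient `V` of `-T_M`. At the antipodal radius `r = π / √k`, where the
secant has its pole, the term `sec²` takes the value `0`. -/
noncomputable def radialPotential (n : ℕ) (k r : ℝ) : ℝ :=
  k * ((n : ℝ) - 1) / 4 * ((cos (√k * r / 2))⁻¹ ^ 2 + (n : ℝ) - 1)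

theorem continuous_mul_of_continuousOn_of_tsupport_subset {X : Type*} [TopologicalSpace X]
    {U : Set X} {φ h : X → ℝ} (hφ : ContinuousOn φ U)
    (hU : IsOpen U) (hh : Continuous h) (hsupp : tsupport h ⊆ U) :
    Continuous fun x => φ x * h x :=
  continuous_of_tsupport fun _ hx =>
    (hφ.continuousAt (hU.mem_nhds (hsupp (tsupport_mul_subset_right hx)))).mul hh.continuousAt

theorem intervalIntegral_deriv_mul_eq_neg_of_eq_zero {a b : ℝ} {p g : ℝ → ℝ}
    (hp : ContDiff ℝ 1 p) (hg : ContDiff ℝ 1 g) (hpa : p a = 0) (hpb : p b = 0) :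
    ∫ x in a..b, deriv p x * g x = -∫ x in a..b, p x * deriv g x := by
  have hparts : ∫ x in a..b, p x * deriv g x =
      p b * g b - p a * g a - ∫ x in a..b, deriv p x * g x :=
    intervalIntegral.integral_mul_deriv_eq_deriv_mul
      (fun x _ => (hp.differentiable_one x).hasDerivAt)
      (fun x _ => (hg.differentiable_one x).hasDerivAt)
      (hp.continuous_deriv_one.intervalIntegrable a b)
      (hg.continuous_deriv_one.intervalIntegrable a b)
  rw [hparts, hpa, hpb]
  ring

section

variable {n : ℕ} {k r : ℝ}

theorem sqrt_mul_mem_Ioo (hr : r ∈ Ioo 0 (π / √k)) : √k * r ∈ Ioo 0 π := by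
  have hk : 0 < √k := (div_pos_iff_of_pos_left pi_pos).1 (hr.1.trans hr.2)
  exact ⟨mul_pos hk hr.1, (lt_div_iff₀' hk).1 hr.2⟩

theorem sin_sqrt_mul_pos (hr : r ∈ Ioo 0 (π / √k)) : 0 < sin (√k * r) :=
  sin_pos_of_mem_Ioo (sqrt_mul_mem_Ioo hr)

theorem cos_sqrt_mul_div_two_pos (hr : r ∈ Ioo 0 (π / √k)) : 0 < cos (√k * r / 2) := by
  obtain ⟨hpos, hlt⟩ := sqrt_mul_mem_Ioo hr
  exact cos_pos_of_mem_Ioo ⟨by linarith, by linarith⟩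

theorem radialPotential_nonneg (hn : 1 ≤ n) (hk : 0 ≤ k) (r : ℝ) :
    0 ≤ radialPotential n k r := by
  have hn' : (0 : ℝ) ≤ n - 1 := sub_nonneg.2 (Nat.one_le_cast.2 hn)
  rw [radialPotential, add_sub_assoc]
  positivity

theorem continuousOn_radialPotential (n : ℕ) (k : ℝ) :
    ContinuousOn (radialPotential n k) (Ioo 0 (π / √k)) := by
  unfold radialPotential
  have hsec : ContinuousOn (fun r => (cos (√k * r / 2))⁻¹) (Ioo 0 (π / √k)) :=
    ContinuousOn.inv₀ (by fun_prop) fun r hr => (cos_sqrt_mul_div_two_pos hr).ne'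
  fun_prop

theorem contDiff_radialDensity (n : ℕ) (k : ℝ) {N : WithTop ℕ∞} :
    ContDiff ℝ N (radialDensity n k) := by
  unfold radialDensity
  fun_prop

theorem radialDensity_apply_zero (hn : 2 ≤ n) (k : ℝ) : radialDensity n k 0 = 0 := by
  simp [radialDensity, show n - 1 ≠ 0 by lia]

theorem radialDensity_apply_pi_div_sqrt (hn : 2 ≤ n) (hk : 0 < k) :
    radialDensity n k (π / √k) = 0 := by
  have hangle : √k * (π / √k) = π := mul_div_cancel₀ π (sqrt_pos.2 hk).ne'
  simp [radialDensity, hangle, show n - 1 ≠ 0 by lia]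

theorem radialDensity_nonneg (n : ℕ) (hr : r ∈ Ioo 0 (π / √k)) : 0 ≤ radialDensity n k r :=
  pow_nonneg (div_nonneg (sin_sqrt_mul_pos hr).le (sqrt_nonneg k)) _

theorem hasDerivAt_radialDensity (hn : 1 ≤ n) (hr : sin (√k * r) ≠ 0) :
    HasDerivAt (radialDensity n k) ((n - 1) * √k * cot (√k * r) * radialDensity n k r) r := by
  have hk : √k ≠ 0 := by
    intro h
    simp [h] at hr
  have hsin : HasDerivAt (fun x => sin (√k * x) / √k) (cos (√k * r)) r := by
    simpa [hk] using ((hasDerivAt_id r).const_mul √k).sin.div_const √k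
  have hcot : √k * cot (√k * r) * (sin (√k * r) / √k) = cos (√k * r) := by
    rw [cot_eq_cos_div_sin]
    field_simp
  obtain ⟨m, rfl⟩ := Nat.exists_eq_add_of_le' hn
  refine (hsin.pow m).congr_deriv ?_
  rw [radialDensity, Nat.add_sub_cancel, ← hcot]
  rcases m with _ | m
  · simp
  · rw [Nat.add_sub_cancel]
    push_cast
    ring

theorem radialOp_mul_radialDensity {f : ℝ → ℝ} (hn : 1 ≤ n) (hr : sin (√k * r) ≠ 0)
    (hf : DifferentiableAt ℝ (deriv f) r) :
    radialOp n k f r * radialDensity n k r =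
      deriv (fun x => radialDensity n k x * deriv f x) r
        - radialPotential n k r * f r * radialDensity n k r := by
  have hflux := (hasDerivAt_radialDensity hn hr).fun_mul hf.hasDerivAt
  rw [hflux.deriv, radialOp, radialPotential]
  ring

theorem integral_radialOp_mul {f g : ℝ → ℝ} (hn : 2 ≤ n) (hk : 0 < k)
    (hf : ContDiff ℝ 2 f) (hg : ContDiff ℝ 1 g)
    (hV : IntegrableOn (fun r => radialPotential n k r * (f r * g r) * radialDensity n k r)
      (Ioo 0 (π / √k))) :
    ∫ r in Ioo 0 (π / √k), radialOp n k f r * g r * radialDensity n k r =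
      -∫ r in Ioo 0 (π / √k),
        (deriv f r * deriv g r + radialPotential n k r * (f r * g r)) * radialDensity n k r := by
  have hf' : ContDiff ℝ 1 (deriv f) := ContDiff.deriv' (by simpa only [one_add_one_eq_two] using hf)
  have hm : ContDiff ℝ 1 (radialDensity n k) := contDiff_radialDensity n k
  set p : ℝ → ℝ := fun r => radialDensity n k r * deriv f r
  have hp : ContDiff ℝ 1 p := hm.mul hf'
  have hparts : ∫ r in Ioo 0 (π / √k), deriv p r * g r =
      -∫ r in Ioo 0 (π / √k), p r * deriv g r := by
    have hle : 0 ≤ π / √k := by positivity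
    simpa only [intervalIntegral.integral_of_le hle, integral_Ioc_eq_integral_Ioo] using
      intervalIntegral_deriv_mul_eq_neg_of_eq_zero hp hg
        (mul_eq_zero_of_left (radialDensity_apply_zero hn k) _)
        (mul_eq_zero_of_left (radialDensity_apply_pi_div_sqrt hn hk) _)
  have hint₁ : IntegrableOn (fun r => deriv p r * g r) (Ioo 0 (π / √k)) :=
    (hp.continuous_deriv_one.mul hg.continuous).integrableOn_Icc.mono_set Ioo_subset_Icc_self
  have hint₂ : IntegrableOn (fun r => p r * deriv g r) (Ioo 0 (π / √k)) :=
    (hp.continuous.mul hg.continuous_deriv_one).integrableOn_Icc.mono_set Ioo_subset_Icc_self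
  calc ∫ r in Ioo 0 (π / √k), radialOp n k f r * g r * radialDensity n k r
      = ∫ r in Ioo 0 (π / √k), (deriv p r * g r
          - radialPotential n k r * (f r * g r) * radialDensity n k r) := by
        refine setIntegral_congr_fun measurableSet_Ioo fun r hr => ?_
        linear_combination g r * radialOp_mul_radialDensity (one_le_two.trans hn)
          (sin_sqrt_mul_pos hr).ne' (hf'.differentiable_one r)
    _ = -((∫ r in Ioo 0 (π / √k), p r * deriv g r)
          + ∫ r in Ioo 0 (π / √k),
              radialPotential n k r * (f r * g r) * radialDensity n k r) := by
        rw [integral_sub hint₁ hV, hparts, neg_add']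
    _ = _ := by
        rw [← integral_add hint₂ hV]
        congr! 3 with r
        ring

theorem integrableOn_radialPotential_mul_sq {f : ℝ → ℝ} (hf : Continuous f)
    (hfs : tsupport f ⊆ Ioo 0 (π / √k)) :
    IntegrableOn (fun r => radialPotential n k r * f r ^ 2 * radialDensity n k r)
      (Ioo 0 (π / √k)) := by
  have hVf : Continuous fun r => radialPotential n k r * f r :=
    continuous_mul_of_continuousOn_of_tsupport_subset (continuousOn_radialPotential n k)
      isOpen_Ioo hf hfs
  have hm : Continuous (radialDensity n k) := (contDiff_radialDensity n k (N := 0)).continuous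
  have hcont : Continuous fun r => radialPotential n k r * f r * f r * radialDensity n k r :=
    (hVf.mul hf).mul hm
  simpa only [sq, mul_assoc] using hcont.integrableOn_Icc.mono_set Ioo_subset_Icc_self

end

theorem radialOp_nonpositive_general {n : ℕ} (hn : 2 ≤ n) {k : ℝ} (hk : 0 < k)
    {f : ℝ → ℝ} (hf : ContDiff ℝ 2 f)
    (hV : IntegrableOn (fun r => radialPotential n k r * f r ^ 2 * radialDensity n k r)
      (Ioo 0 (π / √k))) :
    ∫ r in Ioo 0 (π / √k), radialOp n k f r * f r * radialDensity n k r ≤ 0 := by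
  rw [integral_radialOp_mul hn hk hf (hf.of_le one_le_two) (by simpa only [sq] using hV),
    neg_nonpos]
  refine setIntegral_nonneg measurableSet_Ioo fun r hr => ?_
  have hpot : 0 ≤ radialPotential n k r := radialPotential_nonneg (one_le_two.trans hn) hk.le r
  exact mul_nonneg (add_nonneg (mul_self_nonneg _) (mul_nonneg hpot (mul_self_nonneg _)))
    (radialDensity_nonneg n hr)

theorem radialOp_nonpositive (n : ℕ) (hn : 2 ≤ n) (k : ℝ) (hk : 0 < k)
    (f : ℝ → ℝ) (hf : ContDiff ℝ (⊤ : ℕ∞) f)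
    (hfs : tsupport f ⊆ Ioo 0 (π / Real.sqrt k)) :
    ∫ r in Ioo (0 : ℝ) (π / Real.sqrt k), radialOp n k f r * f r * radialDensity n k r ≤ 0 :=
  radialOp_nonpositive_general hn hk (contDiff_infty.1 hf 2)
    (integrableOn_radialPotential_mul_sq hf.continuous hfs)
end

section
/- Let n ≥ 2 be an integer and σ ∈ ℝ. If w : (−∞, −1) → ℂ is twice differentiable, satisfies the radial hypergeometric equation E(n, −σ²) on (−∞, −1), and is square-integrable with respect to the weight (z(z−1))^{n/2−1}, i.e. ∫_{−∞}^{−1} |w(z)|² · (z(z−1))^{n/2−1} dz < ∞, then w is identically zero. (Hence for nonnegative spectral parameter the eigenvalue equation admits no nonzero solution square-integrable at infinity, so the spectrum in the negative-curvature case is purely continuous.) -/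
open Real Set Complex MeasureTheory

/-- A complex-valued function `w` of a real variable satisfies the radial hypergeometric
equation `E(n, τ)` on the set `I`:
`z(1−z)w'' + (n/2 − nz)w' − (((n−1)/4)(n−1+1/(1−z)) − τ)w = 0` on `I`. -/
def SatisfiesRadialHGC (n : ℕ) (τ : ℂ) (w : ℝ → ℂ) (I : Set ℝ) : Prop :=
  ∀ z ∈ I, (z : ℂ) * (1 - z) * deriv (deriv w) z + ((n : ℂ) / 2 - n * z) * deriv w z
    - (((n : ℂ) - 1) / 4 * ((n : ℂ) - 1 + 1 / (1 - (z : ℂ))) - τ) * w z = 0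

/-! At hyperbolic distance `r` from the origin, `z = (1 - cosh r) / 2`, the function
`u r = (sinh r) ^ ((d - 1) / 2) * w z` satisfies `u'' = -(V - τ) u` with `V = O(exp (-r))`, and the
weight becomes `dr`, so that `u ∈ L²`. Hence `u'' ∈ L²`, integration by parts gives `u' ∈ L²`, and
both `u` and `u'` tend to `0`. With `φ = -τ + exp (-r)` the energy `F = u² + u'² / φ` satisfies
`F' ≥ -k F` for an integrable rate `k` and tends to `0` at infinity (for `τ = 0` because
`u'' = O(exp (-r))` forces `u' = O(exp (-r))`), so it vanishes. Applying continuous linear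
functionals reduces vector-valued `w` to real-valued ones. -/

section Ray

open Filter Topology

variable {R : ℝ}

lemma le_of_hasDerivAt_nonneg_of_tendsto_atTop {f f' : ℝ → ℝ} {L : ℝ}
    (hf : ∀ r ∈ Ici R, HasDerivAt f (f' r) r) (hf' : ∀ r ∈ Ici R, 0 ≤ f' r)
    (hlim : Tendsto f atTop (𝓝 L)) {r : ℝ} (hr : r ∈ Ici R) : f r ≤ L := by
  have hmono : MonotoneOn f (Ici R) :=
    monotoneOn_of_hasDerivWithinAt_nonneg (convex_Ici R) (HasDerivAt.continuousOn hf)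
      (fun s hs => (hf s (interior_subset hs)).hasDerivWithinAt)
      (fun s hs => hf' s (interior_subset hs))
  refine ge_of_tendsto hlim ?_
  filter_upwards [eventually_ge_atTop r] with s hs
  exact hmono hr (le_trans hr hs) hs

lemma abs_le_of_abs_deriv_le_neg_deriv {f f' g g' : ℝ → ℝ}
    (hf : ∀ r ∈ Ici R, HasDerivAt f (f' r) r) (hg : ∀ r ∈ Ici R, HasDerivAt g (g' r) r)
    (hfg : ∀ r ∈ Ici R, |f' r| ≤ -g' r)
    (hf0 : Tendsto f atTop (𝓝 0)) (hg0 : Tendsto g atTop (𝓝 0)) {r : ℝ} (hr : r ∈ Ici R) :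
    |f r| ≤ g r := by
  have upper : f r - g r ≤ 0 :=
    le_of_hasDerivAt_nonneg_of_tendsto_atTop (f := fun s => f s - g s)
      (fun s hs => (hf s hs).sub (hg s hs))
      (fun s hs => by linarith [(abs_le.1 (hfg s hs)).1]) (by simpa using hf0.sub hg0) hr
  have lower : -f r - g r ≤ 0 :=
    le_of_hasDerivAt_nonneg_of_tendsto_atTop (f := fun s => -f s - g s)
      (fun s hs => (hf s hs).neg.sub (hg s hs))
      (fun s hs => by linarith [(abs_le.1 (hfg s hs)).2]) (by simpa using hf0.neg.sub hg0) hr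
  exact abs_le.2 ⟨by linarith, by linarith⟩

/-- Grönwall's inequality backwards from infinity: `F * exp K` is nondecreasing and tends to `0`. -/
lemma nonpos_of_deriv_add_mul_nonneg {F F' K k : ℝ → ℝ} {L : ℝ}
    (hF : ∀ r ∈ Ici R, HasDerivAt F (F' r) r) (hK : ∀ r ∈ Ici R, HasDerivAt K (k r) r)
    (hFk : ∀ r ∈ Ici R, 0 ≤ F' r + k r * F r)
    (hF0 : Tendsto F atTop (𝓝 0)) (hKL : Tendsto K atTop (𝓝 L)) {r : ℝ} (hr : r ∈ Ici R) :
    F r ≤ 0 := by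
  have hprod : F r * rexp (K r) ≤ 0 := by
    refine le_of_hasDerivAt_nonneg_of_tendsto_atTop (f := fun s => F s * rexp (K s))
      (fun s hs => (hF s hs).mul (hK s hs).exp) (fun s hs => ?_)
      (by simpa using hF0.mul hKL.rexp) hr
    have := mul_nonneg (hFk s hs) (Real.exp_pos (K s)).le
    linarith
  exact nonpos_of_mul_nonpos_left hprod (Real.exp_pos _)

lemma frequently_mul_deriv_nonpos {u u' : ℝ → ℝ} (hu : ∀ r ∈ Ici R, HasDerivAt u (u' r) r)
    (hL2 : MemLp u 2 (volume.restrict (Ioi R))) : ∃ᶠ r in atTop, u r * u' r ≤ 0 := by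
  intro hpos
  obtain ⟨S, hS⟩ := eventually_atTop.1 (hpos.and (eventually_ge_atTop R))
  have hmono : MonotoneOn (fun r => u r ^ 2) (Ici S) := by
    have hderiv (r : ℝ) (hr : r ∈ Ici S) : HasDerivAt (fun r => u r ^ 2) (2 * (u r * u' r)) r :=
      ((hu r (hS r hr).2).pow 2).congr_deriv (by ring)
    refine monotoneOn_of_hasDerivWithinAt_nonneg (convex_Ici S) (HasDerivAt.continuousOn hderiv)
      (fun r hr => (hderiv r (interior_subset hr)).hasDerivWithinAt) (fun r hr => ?_)
    linarith [not_le.1 (hS r (interior_subset hr)).1]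
  have hconst : IntegrableOn (fun _ => u S ^ 2) (Ioi S) := by
    refine Integrable.mono' (hL2.integrable_sq.mono_measure
      (Measure.restrict_mono_set _ (Ioi_subset_Ioi (hS S le_rfl).2)))
      aestronglyMeasurable_const ?_
    filter_upwards [ae_restrict_mem measurableSet_Ioi] with r hr
    rw [Real.norm_of_nonneg (sq_nonneg _)]
    exact hmono self_mem_Ici (mem_Ici_of_Ioi hr) (mem_Ioi.1 hr).le
  have hzero : u S = 0 := by simpa [integrableOn_const_iff] using hconst
  exact (hS S le_rfl).1 (by simp [hzero])

lemma memLp_two_deriv {u u' u'' : ℝ → ℝ} (hu : ∀ r ∈ Ici R, HasDerivAt u (u' r) r)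
    (hu' : ∀ r ∈ Ici R, HasDerivAt u' (u'' r) r)
    (hL2 : MemLp u 2 (volume.restrict (Ioi R))) (hL2'' : MemLp u'' 2 (volume.restrict (Ioi R))) :
    MemLp u' 2 (volume.restrict (Ioi R)) := by
  have hcont' : ContinuousOn u' (Ici R) := HasDerivAt.continuousOn hu'
  have hprod : IntegrableOn (fun r => u r * u'' r) (Ioi R) := hL2.integrable_mul hL2''
  have hsq (T : ℝ) : IntegrableOn (fun r => u' r ^ 2) (Ioc R T) :=
    ((hcont'.mono Icc_subset_Ici_self).pow 2).integrableOn_Icc.mono_set Ioc_subset_Icc_self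
  have parts {T : ℝ} (hT : R ≤ T) :
      ∫ r in R..T, u' r ^ 2 = u T * u' T - u R * u' R - ∫ r in R..T, u r * u'' r := by
    have hprodT : IntervalIntegrable (fun r => u r * u'' r) volume R T :=
      (intervalIntegrable_iff_integrableOn_Ioc_of_le hT).2 (hprod.mono_set Ioc_subset_Ioi_self)
    have hsqT := (intervalIntegrable_iff_integrableOn_Ioc_of_le hT).2 (hsq T)
    rw [← intervalIntegral.integral_eq_sub_of_hasDerivAt (f := fun r => u r * u' r)
      (f' := fun r => u' r ^ 2 + u r * u'' r) (fun r hr => ?_) (hsqT.add hprodT),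
      intervalIntegral.integral_add hsqT hprodT, add_sub_cancel_right]
    rw [uIcc_of_le hT] at hr
    exact ((hu r hr.1).mul (hu' r hr.1)).congr_deriv (by ring)
  have hbound {T : ℝ} (hT : R ≤ T) :
      |∫ r in R..T, u r * u'' r| ≤ ∫ r in Ioi R, |u r * u'' r| := by
    refine (intervalIntegral.abs_integral_le_integral_abs hT).trans ?_
    rw [intervalIntegral.integral_of_le hT]
    exact setIntegral_mono_set hprod.abs (Eventually.of_forall fun _ => abs_nonneg _)
      Ioc_subset_Ioi_self.eventuallyLE
  obtain ⟨T, hT, hTu⟩ := exists_seq_forall_of_frequently (frequently_mul_deriv_nonpos hu hL2)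
  refine (memLp_two_iff_integrable_sq
    ((hcont'.mono Ioi_subset_Ici_self).aestronglyMeasurable measurableSet_Ioi)).2 ?_
  refine integrableOn_Ioi_of_intervalIntegral_norm_bounded
    (-(u R * u' R) + ∫ r in Ioi R, |u r * u'' r|) R (fun i => hsq (T i)) hT ?_
  filter_upwards [hT.eventually_ge_atTop R] with i hi
  simp only [norm_pow, Real.norm_eq_abs, sq_abs]
  linarith [parts hi, hTu i, (abs_le.1 (hbound hi)).1]

lemma tendsto_zero_of_memLp_two {u u' : ℝ → ℝ} (hu : ∀ r ∈ Ioi R, HasDerivAt u (u' r) r)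
    (hL2 : MemLp u 2 (volume.restrict (Ioi R))) (hL2' : MemLp u' 2 (volume.restrict (Ioi R))) :
    Tendsto u atTop (𝓝 0) := by
  have hsq : Tendsto (fun r => u r ^ 2) atTop (𝓝 0) := by
    refine tendsto_zero_of_hasDerivAt_of_integrableOn_Ioi (a := R)
      (f' := fun r => 2 * (u r * u' r)) (fun r hr => ?_)
      ((hL2.integrable_mul hL2').const_mul 2) hL2.integrable_sq
    exact ((hu r hr).pow 2).congr_deriv (by ring)
  rw [tendsto_zero_iff_abs_tendsto_zero]
  simpa [Function.comp_def, Real.sqrt_sq_eq_abs] using hsq.sqrt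

end Ray

section Schrodinger

open Filter Topology

variable {R C ω : ℝ} {u v Q : ℝ → ℝ}

lemma tendsto_zero_of_memLp_two_of_bounded_potential
    (hu : ∀ r ∈ Ici R, HasDerivAt u (v r) r)
    (hv : ∀ r ∈ Ici R, HasDerivAt v (-(Q r * u r)) r)
    (hQ : ContinuousOn Q (Ioi R)) (hQC : ∀ r ∈ Ioi R, |Q r| ≤ C)
    (hL2 : MemLp u 2 (volume.restrict (Ioi R))) :
    Tendsto u atTop (𝓝 0) ∧ Tendsto v atTop (𝓝 0) := by
  have hQtop : MemLp Q ⊤ (volume.restrict (Ioi R)) := by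
    refine memLp_top_of_bound (hQ.aestronglyMeasurable measurableSet_Ioi) C ?_
    filter_upwards [ae_restrict_mem measurableSet_Ioi] with r hr using hQC r hr
  have hL2'' : MemLp (fun r => -(Q r * u r)) 2 (volume.restrict (Ioi R)) := (hL2.mul hQtop).neg
  have hL2' := memLp_two_deriv hu hv hL2 hL2''
  exact ⟨tendsto_zero_of_memLp_two (fun r hr => hu r (Ioi_subset_Ici_self hr)) hL2 hL2',
    tendsto_zero_of_memLp_two (fun r hr => hv r (Ioi_subset_Ici_self hr)) hL2' hL2''⟩

/-- The energy `u² + v²/φ` satisfies a Grönwall inequality with rate `k`. -/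
lemma eq_zero_of_tendsto_energy_zero {φ φ' K k : ℝ → ℝ} {L : ℝ}
    (hu : ∀ r ∈ Ici R, HasDerivAt u (v r) r)
    (hv : ∀ r ∈ Ici R, HasDerivAt v (-(Q r * u r)) r)
    (hφ : ∀ r ∈ Ici R, HasDerivAt φ (φ' r) r) (hφpos : ∀ r ∈ Ici R, 0 < φ r)
    (hφ' : ∀ r ∈ Ici R, φ' r ≤ 0)
    (hφQ : ∀ r ∈ Ici R, |φ r - Q r| ≤ k r * √(φ r))
    (hK : ∀ r ∈ Ici R, HasDerivAt K (k r) r) (hKL : Tendsto K atTop (𝓝 L))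
    (hF0 : Tendsto (fun r => u r ^ 2 + v r ^ 2 / φ r) atTop (𝓝 0))
    {r : ℝ} (hr : r ∈ Ici R) : u r = 0 := by
  have hderiv (s : ℝ) (hs : s ∈ Ici R) : HasDerivAt (fun s => u s ^ 2 + v s ^ 2 / φ s)
      (2 * (u s * v s) * (φ s - Q s) / φ s - φ' s * (v s / φ s) ^ 2) s := by
    have hne := (hφpos s hs).ne'
    refine (((hu s hs).pow 2).add (((hv s hs).pow 2).div (hφ s hs) hne)).congr_deriv ?_
    push_cast [Pi.pow_apply]
    field_simp
    ring
  have hrate (s : ℝ) (hs : s ∈ Ici R) :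
      |2 * (u s * v s) * (φ s - Q s) / φ s| ≤ k s * (u s ^ 2 + v s ^ 2 / φ s) := by
    have hφs := hφpos s hs
    obtain ⟨q, hq, hqφ⟩ : ∃ q, 0 < q ∧ φ s = q ^ 2 :=
      ⟨√(φ s), Real.sqrt_pos.2 hφs, (Real.sq_sqrt hφs.le).symm⟩
    have hQs : |φ s - Q s| ≤ k s * q := by simpa [hqφ, Real.sqrt_sq hq.le] using hφQ s hs
    have hk : 0 ≤ k s := nonneg_of_mul_nonneg_left ((abs_nonneg _).trans hQs) hq
    calc |2 * (u s * v s) * (φ s - Q s) / φ s|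
        = 2 * |u s| * |v s| * |φ s - Q s| / q ^ 2 := by
          rw [abs_div, abs_mul, abs_mul, abs_mul, abs_of_pos hφs, abs_two, hqφ]; ring
      _ ≤ 2 * |u s| * |v s| * (k s * q) / q ^ 2 := by gcongr
      _ = k s * (2 * |u s| * (|v s| / q)) := by field_simp
      _ ≤ k s * (|u s| ^ 2 + (|v s| / q) ^ 2) := by
          gcongr; exact two_mul_le_add_sq _ _
      _ = k s * (u s ^ 2 + v s ^ 2 / φ s) := by rw [div_pow, sq_abs, sq_abs, hqφ]
  have henergy : u r ^ 2 + v r ^ 2 / φ r ≤ 0 := by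
    refine nonpos_of_deriv_add_mul_nonneg hderiv hK (fun s hs => ?_) hF0 hKL hr
    have := mul_nonneg (neg_nonneg.2 (hφ' s hs)) (sq_nonneg (v s / φ s))
    linarith [(abs_le.1 (hrate s hs)).1]
  have hv2 : 0 ≤ v r ^ 2 / φ r := div_nonneg (sq_nonneg _) (hφpos r hr).le
  exact pow_eq_zero_iff two_ne_zero |>.1 (le_antisymm (by linarith) (sq_nonneg _))

lemma tendsto_sq_div_add_exp_neg_zero (hω : 0 ≤ ω)
    (hv : ∀ r ∈ Ici R, HasDerivAt v (-(Q r * u r)) r)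
    (hQ : ∀ r ∈ Ici R, |Q r - ω| ≤ C * rexp (-r))
    (hu0 : Tendsto u atTop (𝓝 0)) (hv0 : Tendsto v atTop (𝓝 0)) :
    Tendsto (fun r => v r ^ 2 / (ω + rexp (-r))) atTop (𝓝 0) := by
  have hexp : Tendsto (fun r => C * rexp (-r)) atTop (𝓝 0) := by
    simpa using Real.tendsto_exp_neg_atTop_nhds_zero.const_mul C
  rcases hω.eq_or_lt with rfl | hω
  · obtain ⟨S, hS⟩ := eventually_atTop.1
      ((hu0.abs.eventually_le_const (by simp : |(0 : ℝ)| < 1)).and (eventually_ge_atTop R))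
    have hderiv (r : ℝ) (_ : r ∈ Ici S) :
        HasDerivAt (fun r => C * rexp (-r)) (-(C * rexp (-r))) r :=
      ((hasDerivAt_neg r).exp.const_mul C).congr_deriv (by ring)
    have hvexp (r : ℝ) (hr : r ∈ Ici S) : |v r| ≤ C * rexp (-r) := by
      refine abs_le_of_abs_deriv_le_neg_deriv (fun s hs => hv s (hS s hs).2) hderiv
        (fun s hs => ?_) hv0 hexp hr
      have hQs : |Q s| ≤ C * rexp (-s) := by simpa using hQ s (hS s hs).2
      rw [abs_neg, abs_mul, neg_neg]
      exact (mul_le_of_le_one_right (abs_nonneg _) (hS s hs).1).trans hQs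
    refine squeeze_zero' (Eventually.of_forall fun r => by positivity) ?_
      (by simpa using hexp.const_mul C)
    filter_upwards [eventually_ge_atTop S] with r hr
    rw [zero_add, div_le_iff₀ (Real.exp_pos _), ← sq_abs]
    calc |v r| ^ 2 ≤ (C * rexp (-r)) ^ 2 := by gcongr; exact hvexp r hr
      _ = C * (C * rexp (-r)) * rexp (-r) := by ring
  · have hden : Tendsto (fun r => ω + rexp (-r)) atTop (𝓝 (ω + 0)) :=
      Real.tendsto_exp_neg_atTop_nhds_zero.const_add ω
    rw [add_zero] at hden
    simpa [Pi.div_def] using (hv0.pow 2).div hden hω.ne'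

theorem eq_zero_of_memLp_two_of_potential_sub_le_exp_neg (hω : 0 ≤ ω)
    (hu : ∀ r ∈ Ici R, HasDerivAt u (v r) r)
    (hv : ∀ r ∈ Ici R, HasDerivAt v (-(Q r * u r)) r)
    (hQcont : ContinuousOn Q (Ioi R)) (hQ : ∀ r ∈ Ici R, |Q r - ω| ≤ C * rexp (-r))
    (hL2 : MemLp u 2 (volume.restrict (Ioi R))) {r : ℝ} (hr : r ∈ Ici R) : u r = 0 := by
  have hC : 0 ≤ C :=
    nonneg_of_mul_nonneg_left ((abs_nonneg _).trans (hQ R self_mem_Ici)) (Real.exp_pos _)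
  have hQbdd (s : ℝ) (hs : s ∈ Ioi R) : |Q s| ≤ C * rexp (-R) + ω :=
    calc |Q s| ≤ |Q s - ω| + |ω| := by simpa using abs_add_le (Q s - ω) ω
      _ ≤ C * rexp (-s) + ω := by rw [abs_of_nonneg hω]; gcongr; exact hQ s (mem_Ici_of_Ioi hs)
      _ ≤ C * rexp (-R) + ω := by gcongr; exact hs.le
  obtain ⟨hu0, hv0⟩ := tendsto_zero_of_memLp_two_of_bounded_potential hu hv hQcont hQbdd hL2
  refine eq_zero_of_tendsto_energy_zero (φ := fun s => ω + rexp (-s)) (φ' := fun s => -rexp (-s))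
    (K := fun s => -2 * (1 + C) * rexp (-s / 2)) (k := fun s => (1 + C) * rexp (-s / 2)) (L := 0)
    hu hv (fun s _ => ?_) (fun s _ => by positivity)
    (fun s _ => neg_nonpos.2 (Real.exp_pos _).le) (fun s hs => ?_) (fun s _ => ?_) ?_ ?_ hr
  · exact ((hasDerivAt_neg s).exp.const_add ω).congr_deriv (by ring)
  · have hsqrt : rexp (-s / 2) ≤ √(ω + rexp (-s)) := by
      rw [Real.exp_half]
      exact Real.sqrt_le_sqrt (by linarith)
    calc |ω + rexp (-s) - Q s| ≤ |rexp (-s)| + |Q s - ω| := by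
          rw [show ω + rexp (-s) - Q s = rexp (-s) - (Q s - ω) by ring]; exact abs_sub _ _
      _ ≤ rexp (-s) + C * rexp (-s) := by rw [abs_of_pos (Real.exp_pos _)]; gcongr; exact hQ s hs
      _ = (1 + C) * rexp (-s / 2) * rexp (-s / 2) := by
          rw [mul_assoc, ← Real.exp_add, add_halves]; ring
      _ ≤ (1 + C) * rexp (-s / 2) * √(ω + rexp (-s)) := by gcongr
  · exact ((((hasDerivAt_neg s).div_const 2).exp).const_mul (-2 * (1 + C))).congr_deriv (by ring)
  · have : Tendsto (fun s : ℝ => rexp (-s / 2)) atTop (𝓝 0) :=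
      Real.tendsto_exp_atBot.comp (tendsto_neg_atTop_atBot.atBot_div_const two_pos)
    simpa using this.const_mul (-2 * (1 + C))
  · simpa using (hu0.pow 2).add (tendsto_sq_div_add_exp_neg_zero hω hv hQ hu0 hv0)

end Schrodinger

/-- The radial hypergeometric equation `E(d, τ)` on `s` for a real dimension parameter `d`, a real
spectral parameter `τ` and a function with values in a real normed space. The derivatives `w'` and
`w''` are part of the data, so that none of the terms of the equation is a junk value of `deriv`. -/
structure IsRadialSolution {E : Type*} [NormedAddCommGroup E] [NormedSpace ℝ E]
    (d τ : ℝ) (w w' w'' : ℝ → E) (s : Set ℝ) : Prop where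
  hasDerivAt : ∀ z ∈ s, HasDerivAt w (w' z) z
  hasDerivAt_deriv : ∀ z ∈ s, HasDerivAt w' (w'' z) z
  equation : ∀ z ∈ s, (z * (1 - z)) • w'' z + (d / 2 - d * z) • w' z
    - ((d - 1) / 4 * (d - 1 + 1 / (1 - z)) - τ) • w z = 0

lemma SatisfiesRadialHGC.isRadialSolution {n : ℕ} {τ : ℝ} {w : ℝ → ℂ} {s : Set ℝ}
    (hw : SatisfiesRadialHGC n τ w s) (hdiff : ∀ z ∈ s, DifferentiableAt ℝ w z)
    (hdiff' : ∀ z ∈ s, DifferentiableAt ℝ (deriv w) z) :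
    IsRadialSolution n τ w (deriv w) (deriv (deriv w)) s where
  hasDerivAt z hz := (hdiff z hz).hasDerivAt
  hasDerivAt_deriv z hz := (hdiff' z hz).hasDerivAt
  equation z hz := by simpa [Complex.real_smul] using hw z hz

lemma IsRadialSolution.clm_comp {E F : Type*} [NormedAddCommGroup E] [NormedSpace ℝ E]
    [NormedAddCommGroup F] [NormedSpace ℝ F] {d τ : ℝ} {w w' w'' : ℝ → E} {s : Set ℝ}
    (hw : IsRadialSolution d τ w w' w'' s) (L : E →L[ℝ] F) :
    IsRadialSolution d τ (L ∘ w) (L ∘ w') (L ∘ w'') s where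
  hasDerivAt z hz := L.hasFDerivAt.comp_hasDerivAt z (hw.hasDerivAt z hz)
  hasDerivAt_deriv z hz := L.hasFDerivAt.comp_hasDerivAt z (hw.hasDerivAt_deriv z hz)
  equation z hz := by simpa using congrArg L (hw.equation z hz)

section HyperbolicCoordinate

/-- The point `z = (1 - cosh r) / 2 = -sinh² (r / 2)` at hyperbolic distance `r` from the origin. -/
noncomputable def radialPoint (r : ℝ) : ℝ := (1 - Real.cosh r) / 2

lemma hasDerivAt_radialPoint (r : ℝ) : HasDerivAt radialPoint (-(Real.sinh r / 2)) r :=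
  (((Real.hasDerivAt_cosh r).const_sub 1).div_const 2).congr_deriv (by ring)

lemma radialPoint_mul_one_sub (r : ℝ) :
    radialPoint r * (1 - radialPoint r) = -(Real.sinh r / 2) ^ 2 := by
  rw [radialPoint]
  linear_combination (-1 / 4) * Real.cosh_sq r

lemma radialPoint_arcosh {z : ℝ} (hz : z ≤ 0) : radialPoint (arcosh (1 - 2 * z)) = z := by
  rw [radialPoint, Real.cosh_arcosh (by linarith)]
  ring

lemma strictAntiOn_radialPoint : StrictAntiOn radialPoint (Ici 0) := fun r hr s hs hrs => by
  have := Real.cosh_strictMonoOn hr hs hrs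
  simp only [radialPoint]
  linarith

lemma sinh_rpow_eq_weight_mul_deriv (d : ℝ) {r : ℝ} (hr : 0 < r) :
    Real.sinh r ^ (d - 1) = 2 ^ (d - 1) *
      (|-(Real.sinh r / 2)| * (radialPoint r * (radialPoint r - 1)) ^ (d / 2 - 1)) := by
  have hs2 : 0 < Real.sinh r / 2 := half_pos (Real.sinh_pos_iff.2 hr)
  have hpoint : radialPoint r * (radialPoint r - 1) = (Real.sinh r / 2) ^ (2 : ℝ) := by
    rw [Real.rpow_two]
    linarith [radialPoint_mul_one_sub r]
  calc Real.sinh r ^ (d - 1)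
      = (2 * (Real.sinh r / 2)) ^ (d - 1) := by rw [mul_div_cancel₀ _ two_ne_zero]
    _ = 2 ^ (d - 1) * (Real.sinh r / 2) ^ (1 + 2 * (d / 2 - 1)) := by
        rw [Real.mul_rpow zero_le_two hs2.le]; ring_nf
    _ = _ := by
        rw [Real.rpow_add hs2, Real.rpow_one, Real.rpow_mul hs2.le, hpoint, abs_neg,
          abs_of_pos hs2]

/-- The potential in the Liouville normal form `u'' = (τ - V) u` of the radial hypergeometric
equation `E(2 a + 1, τ)`. -/
noncomputable def hyperbolicPotential (a r : ℝ) : ℝ :=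
  a * (Real.cosh r - a) / Real.sinh r ^ 2

lemma continuousOn_hyperbolicPotential (a : ℝ) : ContinuousOn (hyperbolicPotential a) (Ioi 0) :=
  ContinuousOn.div (by fun_prop) (by fun_prop)
    fun _ hr => pow_ne_zero 2 (Real.sinh_pos_iff.2 hr).ne'

lemma exists_abs_hyperbolicPotential_le_exp_neg (a : ℝ) {R : ℝ} (hR : 0 < R) :
    ∃ C, ∀ r ∈ Ici R, |hyperbolicPotential a r| ≤ C * rexp (-r) := by
  set δ := (1 - rexp (-2 * R)) / 2 with hδ_def
  have hδ : 0 < δ := by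
    have : rexp (-2 * R) < 1 := by simpa using hR
    linarith
  refine ⟨|a| * (1 + |a|) / δ ^ 2, fun r hr => ?_⟩
  have hrR : R ≤ r := hr
  have hexp : 1 ≤ rexp r := Real.one_le_exp (hR.le.trans hr)
  have hsinh : δ * rexp r ≤ Real.sinh r := by
    have : rexp (-r) ≤ rexp (-2 * R) * rexp r := by
      rw [← Real.exp_add]
      exact Real.exp_le_exp.2 (by linarith)
    rw [Real.sinh_eq, hδ_def]
    linarith
  have hcosh : |Real.cosh r - a| ≤ (1 + |a|) * rexp r := by
    have hcosh_le : Real.cosh r ≤ rexp r := by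
      rw [← Real.cosh_add_sinh]
      linarith [Real.sinh_pos_iff.2 (hR.trans_le hr)]
    calc |Real.cosh r - a| ≤ |Real.cosh r| + |a| := abs_sub _ _
      _ ≤ rexp r + |a| * rexp r := by
          rw [abs_of_pos (Real.cosh_pos r)]
          exact add_le_add hcosh_le (le_mul_of_one_le_right (abs_nonneg a) hexp)
      _ = (1 + |a|) * rexp r := by ring
  calc |hyperbolicPotential a r| = |a| * |Real.cosh r - a| / Real.sinh r ^ 2 := by
        rw [hyperbolicPotential, abs_div, abs_mul, abs_of_nonneg (sq_nonneg (Real.sinh r))]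
    _ ≤ |a| * ((1 + |a|) * rexp r) / (δ * rexp r) ^ 2 := by gcongr
    _ = |a| * (1 + |a|) / δ ^ 2 * rexp (-r) := by
        rw [Real.exp_neg]
        field_simp

end HyperbolicCoordinate

section LiouvilleTransform

variable {d τ : ℝ}

/-- The Liouville transform `u(r) = (sinh r)^a w(z)`, `z = (1 - cosh r) / 2`, which removes the
first-order term from the radial hypergeometric equation when `a = (d - 1) / 2`. -/
noncomputable def liouvilleTransform (a : ℝ) (w : ℝ → ℝ) (r : ℝ) : ℝ :=
  Real.sinh r ^ a * w (radialPoint r)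

/-- The derivative of `liouvilleTransform a w`, where `w'` is the derivative of `w`. -/
noncomputable def liouvilleTransformDeriv (a : ℝ) (w w' : ℝ → ℝ) (r : ℝ) : ℝ :=
  Real.sinh r ^ a *
    (a * Real.cosh r / Real.sinh r * w (radialPoint r) - Real.sinh r / 2 * w' (radialPoint r))

lemma hasDerivAt_sinh_rpow (a : ℝ) {r : ℝ} (hr : 0 < r) :
    HasDerivAt (fun r => Real.sinh r ^ a)
      (Real.sinh r ^ a * (a * Real.cosh r / Real.sinh r)) r := by
  have hs : Real.sinh r ≠ 0 := (Real.sinh_pos_iff.2 hr).ne'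
  refine ((Real.hasDerivAt_sinh r).rpow_const (Or.inl hs)).congr_deriv ?_
  rw [Real.rpow_sub_one hs]
  field_simp

lemma hasDerivAt_liouvilleTransform (a : ℝ) {w w' : ℝ → ℝ} {r : ℝ} (hr : 0 < r)
    (hw : HasDerivAt w (w' (radialPoint r)) (radialPoint r)) :
    HasDerivAt (liouvilleTransform a w) (liouvilleTransformDeriv a w w' r) r := by
  refine ((hasDerivAt_sinh_rpow a hr).mul
    (hw.comp r (hasDerivAt_radialPoint r))).congr_deriv ?_
  rw [liouvilleTransformDeriv, Function.comp_apply]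
  ring

lemma IsRadialSolution.hasDerivAt_liouvilleTransformDeriv {w w' w'' : ℝ → ℝ} {s : Set ℝ}
    (hw : IsRadialSolution d τ w w' w'' s) {r : ℝ} (hr : 0 < r) (hrs : radialPoint r ∈ s) :
    HasDerivAt (liouvilleTransformDeriv ((d - 1) / 2) w w')
      (-((hyperbolicPotential ((d - 1) / 2) r - τ) * liouvilleTransform ((d - 1) / 2) w r)) r := by
  have hs : Real.sinh r ≠ 0 := (Real.sinh_pos_iff.2 hr).ne'
  have hcosh := Real.cosh_sq r
  have hw_comp := (hw.hasDerivAt _ hrs).comp r (hasDerivAt_radialPoint r)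
  have hw'_comp := (hw.hasDerivAt_deriv _ hrs).comp r (hasDerivAt_radialPoint r)
  have hcoth := ((Real.hasDerivAt_cosh r).const_mul ((d - 1) / 2)).div (Real.hasDerivAt_sinh r) hs
  refine ((hasDerivAt_sinh_rpow _ hr).mul ((hcoth.mul hw_comp).sub
    (((Real.hasDerivAt_sinh r).div_const 2).mul hw'_comp))).congr_deriv ?_
  have hinv : 1 / (1 - radialPoint r) = 2 * (Real.cosh r - 1) / Real.sinh r ^ 2 := by
    have : 1 - radialPoint r ≠ 0 := by
      rw [radialPoint]; linarith [Real.cosh_pos r]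
    rw [div_eq_div_iff this (pow_ne_zero 2 hs), radialPoint]
    linear_combination -hcosh
  have hw'' : (Real.sinh r / 2) ^ 2 * w'' (radialPoint r) = d / 2 * Real.cosh r * w' (radialPoint r)
      - ((d - 1) / 4 * (d - 1 + 2 * (Real.cosh r - 1) / Real.sinh r ^ 2) - τ)
        * w (radialPoint r) := by
    have heq := hw.equation _ hrs
    have hfirst : d / 2 - d * radialPoint r = d / 2 * Real.cosh r := by rw [radialPoint]; ring
    rw [hinv, radialPoint_mul_one_sub, hfirst] at heq
    simp only [smul_eq_mul] at heq
    linear_combination -heq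
  simp only [hyperbolicPotential, liouvilleTransform, Function.comp_apply, Pi.div_apply,
    Pi.mul_apply, Pi.sub_apply]
  linear_combination (norm := (field_simp; ring)) Real.sinh r ^ ((d - 1) / 2) * hw''
    + Real.sinh r ^ ((d - 1) / 2) * w (radialPoint r) * ((d - 1) / 2) * ((d - 1) / 2 - 1)
      / Real.sinh r ^ 2 * hcosh

lemma integrableOn_sq_liouvilleTransform {w : ℝ → ℝ} {s : Set ℝ} {R : ℝ} (hR : 0 ≤ R)
    (hmaps : MapsTo radialPoint (Ioi R) s)
    (hL2 : IntegrableOn (fun z => w z ^ 2 * (z * (z - 1)) ^ (d / 2 - 1)) s) :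
    IntegrableOn (fun r => liouvilleTransform ((d - 1) / 2) w r ^ 2) (Ioi R) := by
  have hinj : InjOn radialPoint (Ioi R) :=
    strictAntiOn_radialPoint.injOn.mono fun r hr => hR.trans (mem_Ioi.1 hr).le
  have hcov := (integrableOn_image_iff_integrableOn_abs_deriv_smul measurableSet_Ioi
    (fun r _ => (hasDerivAt_radialPoint r).hasDerivWithinAt) hinj _).1
    (hL2.mono_set hmaps.image_subset)
  refine IntegrableOn.congr_fun (hcov.const_mul (2 ^ (d - 1))) (fun r hr => ?_) measurableSet_Ioi
  have hr0 : 0 < r := hR.trans_lt hr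
  have hsq : (Real.sinh r ^ ((d - 1) / 2)) ^ 2 = Real.sinh r ^ (d - 1) := by
    rw [← Real.rpow_mul_natCast (Real.sinh_pos_iff.2 hr0).le]
    congr 1
    push_cast
    ring
  simp only [liouvilleTransform, mul_pow, hsq, sinh_rpow_eq_weight_mul_deriv d hr0, smul_eq_mul]
  ring

lemma memLp_two_liouvilleTransform_clm_comp {E : Type*} [NormedAddCommGroup E] [NormedSpace ℝ E]
    {w : ℝ → E} {s : Set ℝ} {R : ℝ} (hw : ContinuousOn w s) (hR : 0 ≤ R)
    (hmaps : MapsTo radialPoint (Ioi R) s)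
    (hL2 : IntegrableOn (fun z => ‖w z‖ ^ 2 * (z * (z - 1)) ^ (d / 2 - 1)) s) (L : E →L[ℝ] ℝ) :
    MemLp (liouvilleTransform ((d - 1) / 2) (L ∘ w)) 2 (volume.restrict (Ioi R)) := by
  have hsinh (r : ℝ) (hr : r ∈ Ioi R) : 0 < Real.sinh r := Real.sinh_pos_iff.2 (hR.trans_lt hr)
  have hcont : ContinuousOn (liouvilleTransform ((d - 1) / 2) (L ∘ w)) (Ioi R) :=
    (Real.continuous_sinh.continuousOn.rpow_const fun r hr => Or.inl (hsinh r hr).ne').mul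
      (L.continuous.comp_continuousOn (hw.comp
        (fun r _ => (hasDerivAt_radialPoint r).continuousAt.continuousWithinAt) hmaps))
  have hmeas := hcont.aestronglyMeasurable (μ := volume) measurableSet_Ioi
  refine (memLp_two_iff_integrable_sq hmeas).2 (Integrable.mono'
    ((integrableOn_sq_liouvilleTransform hR hmaps hL2).const_mul (‖L‖ ^ 2)) (hmeas.pow 2) ?_)
  filter_upwards with r
  rw [Real.norm_of_nonneg (sq_nonneg _)]
  calc liouvilleTransform ((d - 1) / 2) (L ∘ w) r ^ 2
      = (Real.sinh r ^ ((d - 1) / 2)) ^ 2 * ‖L (w (radialPoint r))‖ ^ 2 := by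
        rw [liouvilleTransform, mul_pow, Real.norm_eq_abs, sq_abs, Function.comp_apply]
    _ ≤ (Real.sinh r ^ ((d - 1) / 2)) ^ 2 * (‖L‖ * ‖w (radialPoint r)‖) ^ 2 := by
        gcongr
        exact L.le_opNorm _
    _ = ‖L‖ ^ 2 * liouvilleTransform ((d - 1) / 2) (fun z => ‖w z‖) r ^ 2 := by
        rw [liouvilleTransform]
        ring

end LiouvilleTransform

section RadialSolution

variable {d τ c : ℝ}

lemma radialPoint_mem_Iio {z r : ℝ} (hz : z < c) (hc : c ≤ 0)
    (hr : r ∈ Ici (arcosh (1 - 2 * z))) : radialPoint r ∈ Iio c := by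
  have hR : 0 ≤ arcosh (1 - 2 * z) := arcosh_nonneg (by linarith)
  have := strictAntiOn_radialPoint.antitoneOn hR (hR.trans hr) hr
  rw [radialPoint_arcosh (hz.le.trans hc)] at this
  exact this.trans_lt hz

lemma IsRadialSolution.eq_zero_of_memLp_liouvilleTransform (hτ : τ ≤ 0) (hc : c ≤ 0)
    {w w' w'' : ℝ → ℝ} (hw : IsRadialSolution d τ w w' w'' (Iio c)) {z : ℝ} (hz : z ∈ Iio c)
    (hL2 : MemLp (liouvilleTransform ((d - 1) / 2) w) 2
      (volume.restrict (Ioi (arcosh (1 - 2 * z))))) : w z = 0 := by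
  have hz0 : z < 0 := lt_of_lt_of_le hz hc
  have hR : 0 < arcosh (1 - 2 * z) := arcosh_pos (by linarith)
  set R := arcosh (1 - 2 * z) with hR_def
  obtain ⟨C, hC⟩ := exists_abs_hyperbolicPotential_le_exp_neg ((d - 1) / 2) hR
  have huz : liouvilleTransform ((d - 1) / 2) w R = 0 := by
    refine eq_zero_of_memLp_two_of_potential_sub_le_exp_neg (ω := -τ) (by linarith)
      (fun r hr => hasDerivAt_liouvilleTransform _ (hR.trans_le hr)
        (hw.hasDerivAt _ (radialPoint_mem_Iio hz hc hr)))
      (fun r hr => hw.hasDerivAt_liouvilleTransformDeriv (hR.trans_le hr)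
        (radialPoint_mem_Iio hz hc hr))
      (((continuousOn_hyperbolicPotential _).mono (Ioi_subset_Ioi hR.le)).sub continuousOn_const)
      (fun r hr => by simpa using hC r hr) hL2 self_mem_Ici
  rw [liouvilleTransform, hR_def, radialPoint_arcosh hz0.le] at huz
  exact (mul_eq_zero.1 huz).resolve_left (Real.rpow_pos_of_pos (Real.sinh_pos_iff.2 hR) _).ne'

end RadialSolution

theorem no_square_integrable_eigenfunction_general {E : Type*} [NormedAddCommGroup E]
    [NormedSpace ℝ E] {d τ c : ℝ} (hτ : τ ≤ 0) (hc : c ≤ 0) {w w' w'' : ℝ → E}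
    (hw : IsRadialSolution d τ w w' w'' (Iio c))
    (hL2 : IntegrableOn (fun z => ‖w z‖ ^ 2 * (z * (z - 1)) ^ (d / 2 - 1)) (Iio c)) :
    ∀ z ∈ Iio c, w z = 0 := by
  intro z hz
  refine SeparatingDual.eq_zero_of_forall_dual_eq_zero (R := ℝ) fun L => ?_
  have hz0 : z < 0 := lt_of_lt_of_le hz hc
  exact (hw.clm_comp L).eq_zero_of_memLp_liouvilleTransform hτ hc hz <|
    memLp_two_liouvilleTransform_clm_comp (HasDerivAt.continuousOn hw.hasDerivAt)
      (arcosh_nonneg (by linarith))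
      (fun r hr => radialPoint_mem_Iio hz hc (Ioi_subset_Ici_self hr)) hL2 L

theorem no_square_integrable_eigenfunction (n : ℕ) (hn : 2 ≤ n) (σ : ℝ)
    (w : ℝ → ℂ)
    (hdiff : ∀ z ∈ Iio (-1 : ℝ), DifferentiableAt ℝ w z)
    (hdiff2 : ∀ z ∈ Iio (-1 : ℝ), DifferentiableAt ℝ (deriv w) z)
    (hE : SatisfiesRadialHGC n (-(σ : ℂ) ^ 2) w (Iio (-1)))
    (hL2 : IntegrableOn
      (fun z : ℝ => ‖w z‖ ^ 2 * (z * (z - 1)) ^ ((n : ℝ) / 2 - 1)) (Iio (-1))) :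
    ∀ z ∈ Iio (-1 : ℝ), w z = 0 := by
  have hw : SatisfiesRadialHGC n ((-σ ^ 2 : ℝ) : ℂ) w (Iio (-1)) := by simpa using hE
  exact no_square_integrable_eigenfunction_general (neg_nonpos.2 (sq_nonneg σ)) (by norm_num)
    (hw.isRadialSolution hdiff hdiff2) hL2
end

section
/- Let n ≥ 2 be an integer and let h : ℝ × ℝ^{n−1} → ℂ be a smooth compactly supported function. For α ∈ ℂ with Re α > n, the function (t, x) ↦ (t² − ‖x‖²)^{(α−n)/2} · h(t, x), where (t² − ‖x‖²)^{w} := exp(w·log(t² − ‖x‖²)) with the real logarithm, is integrable over the solid forward light cone { (t, x) ∈ ℝ × ℝ^{n−1} : t > ‖x‖ }, and the map α ↦ ( π^{1−n/2} · 2^{1−α} / ( Γ(α/2) · Γ((α−n)/2 + 1) ) ) · ∫_{t > ‖x‖} (t² − ‖x‖²)^{(α−n)/2} · h(t, x) dt dx is holomorphic on the half-plane { α ∈ ℂ : Re α > n }. -/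
open Real Set Complex MeasureTheory Filter

/-!
On the support of `h` inside the light cone, `log (t² - ‖x‖²)` is bounded above, although it tends
to `-∞` at the boundary of the cone. Hence `(t² - ‖x‖²) ^ w * h` is dominated by a multiple of `|h|`
locally uniformly in `w` with `0 ≤ re w`, and Cauchy's estimate turns this domination into one of
the `w`-derivative, so no logarithmic singularity has to be integrated. The normalizing factor is
entire because `1 / Γ` is.
-/

open scoped Topology

section ParametricIntegral

variable {X E : Type*} [MeasurableSpace X] {μ : Measure X} [NormedAddCommGroup E]

theorem aestronglyMeasurable_deriv_of_eventually {𝕜 : Type*} [NontriviallyNormedField 𝕜]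
    [NormedSpace 𝕜 E] {F : 𝕜 → X → E} {z₀ : 𝕜}
    (hmeas : ∀ᶠ z in 𝓝 z₀, AEStronglyMeasurable (F z) μ)
    (hdiff : ∀ᵐ x ∂μ, DifferentiableAt 𝕜 (F · x) z₀) :
    AEStronglyMeasurable (fun x ↦ deriv (F · x) z₀) μ := by
  obtain ⟨u, hu, humeas⟩ :=
    exists_seq_forall_of_frequently (hmeas.filter_mono (nhdsWithin_le_nhds (s := {z₀}ᶜ))).frequently
  have hslope : ∀ k, AEStronglyMeasurable (fun x ↦ slope (F · x) z₀ (u k)) μ := fun k ↦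
    ((humeas k).sub hmeas.self_of_nhds).const_smul (u k - z₀)⁻¹
  exact aestronglyMeasurable_of_tendsto_ae atTop hslope <|
    hdiff.mono fun x hx ↦ hx.hasDerivAt.tendsto_slope.comp hu

variable [NormedSpace ℂ E]

theorem norm_deriv_le_div_of_mem_ball {f : ℂ → E} {c z : ℂ} {r δ C : ℝ} (hδ : 0 < δ)
    (hf : DifferentiableOn ℂ f (Metric.ball c (r + δ)))
    (hC : ∀ w ∈ Metric.ball c (r + δ), ‖f w‖ ≤ C) (hz : z ∈ Metric.ball c r) :
    ‖deriv f z‖ ≤ C / δ := by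
  have hsub : Metric.closedBall z δ ⊆ Metric.ball c (r + δ) :=
    Metric.closedBall_subset_ball' (by rw [Metric.mem_ball] at hz; linarith)
  exact norm_deriv_le_of_forall_mem_sphere_norm_le hδ (hf.diffContOnCl_ball hsub)
    fun w hw ↦ hC w (hsub (Metric.sphere_subset_closedBall hw))

theorem differentiableAt_integral_of_dominated_loc {F : ℂ → X → E} {bound : X → ℝ} {z₀ : ℂ}
    {s : Set ℂ} (hs : s ∈ 𝓝 z₀) (hmeas : ∀ᶠ z in 𝓝 z₀, AEStronglyMeasurable (F z) μ)
    (hbound : ∀ᵐ x ∂μ, ∀ z ∈ s, ‖F z x‖ ≤ bound x) (hbound_int : Integrable bound μ)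
    (hdiff : ∀ᵐ x ∂μ, DifferentiableOn ℂ (F · x) s) :
    DifferentiableAt ℂ (fun z ↦ ∫ x, F z x ∂μ) z₀ := by
  obtain ⟨ε, hε, hball⟩ := Metric.mem_nhds_iff.1 hs
  obtain ⟨r, hr, rfl⟩ : ∃ r, 0 < r ∧ r + r = ε := ⟨ε / 2, half_pos hε, add_halves ε⟩
  have hderiv_bound : ∀ᵐ x ∂μ, ∀ z ∈ Metric.ball z₀ r, ‖deriv (F · x) z‖ ≤ bound x / r := by
    filter_upwards [hbound, hdiff] with x hx hdx z hz
    exact norm_deriv_le_div_of_mem_ball hr (hdx.mono hball) (fun w hw ↦ hx w (hball hw)) hz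
  have hderiv : ∀ᵐ x ∂μ, ∀ z ∈ Metric.ball z₀ r, HasDerivAt (F · x) (deriv (F · x) z) z := by
    filter_upwards [hdiff] with x hdx z hz
    have hz' : z ∈ Metric.ball z₀ (r + r) := Metric.ball_subset_ball (by linarith) hz
    exact ((hdx.mono hball).differentiableAt (Metric.isOpen_ball.mem_nhds hz')).hasDerivAt
  exact (hasDerivAt_integral_of_dominated_loc_of_deriv_le (Metric.ball_mem_nhds z₀ hr) hmeas
    (hbound_int.mono' hmeas.self_of_nhds (hbound.mono fun x hx ↦ hx z₀ (mem_of_mem_nhds hs)))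
    (aestronglyMeasurable_deriv_of_eventually hmeas
      (hdiff.mono fun x hdx ↦ hdx.differentiableAt hs))
    hderiv_bound (hbound_int.div_const r) hderiv).2.differentiableAt

end ParametricIntegral

section ExponentialIntegral

variable {X E : Type*} [MeasurableSpace X] {μ : Measure X} [NormedAddCommGroup E]
  {φ : X → ℝ} {g : X → E} {L : ℝ}

theorem exp_mul_le_exp_mul_add_exp_mul {a b c : ℝ} (hc : c ∈ Icc a b) (t : ℝ) :
    Real.exp (c * t) ≤ Real.exp (a * t) + Real.exp (b * t) := by
  rcases le_total 0 t with ht | ht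
  · exact (Real.exp_le_exp.2 (mul_le_mul_of_nonneg_right hc.2 ht)).trans
      (le_add_of_nonneg_left (Real.exp_pos _).le)
  · exact (Real.exp_le_exp.2 (mul_le_mul_of_nonpos_right hc.1 ht)).trans
      (le_add_of_nonneg_right (Real.exp_pos _).le)

theorem integrable_exp_mul_mul_norm_of_le {c : ℝ} (hφ : AEMeasurable φ μ) (hg : Integrable g μ)
    (hL : ∀ᵐ x ∂μ, g x ≠ 0 → φ x ≤ L) (hc : 0 ≤ c) :
    Integrable (fun x ↦ Real.exp (c * φ x) * ‖g x‖) μ := by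
  refine (hg.norm.const_mul (Real.exp (c * L))).mono'
    ((Real.measurable_exp.comp_aemeasurable (hφ.const_mul c)).aestronglyMeasurable.mul
      hg.norm.aestronglyMeasurable) ?_
  filter_upwards [hL] with x hx
  rw [Real.norm_of_nonneg (by positivity)]
  rcases eq_or_ne (g x) 0 with hgx | hgx
  · simp [hgx]
  · gcongr
    exact hx hgx

variable [NormedSpace ℂ E]

theorem norm_cexp_mul_ofReal_smul (w : ℂ) (t : ℝ) (v : E) :
    ‖Complex.exp (w * t) • v‖ = Real.exp (w.re * t) * ‖v‖ := by
  rw [norm_smul, Complex.norm_exp, Complex.re_mul_ofReal]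

theorem aestronglyMeasurable_cexp_mul_smul (hφ : AEMeasurable φ μ)
    (hg : AEStronglyMeasurable g μ) (w : ℂ) :
    AEStronglyMeasurable (fun x ↦ Complex.exp (w * φ x) • g x) μ :=
  (Complex.measurable_exp.comp_aemeasurable
    (hφ.complex_ofReal.const_mul w)).aestronglyMeasurable.smul hg

theorem differentiableAt_integral_cexp_mul_smul {a b : ℝ} {w : ℂ} (hφ : AEMeasurable φ μ)
    (hg : AEStronglyMeasurable g μ) (ha : Integrable (fun x ↦ Real.exp (a * φ x) * ‖g x‖) μ)
    (hb : Integrable (fun x ↦ Real.exp (b * φ x) * ‖g x‖) μ) (hw : w.re ∈ Ioo a b) :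
    DifferentiableAt ℂ (fun z : ℂ ↦ ∫ x, Complex.exp (z * φ x) • g x ∂μ) w := by
  have hstrip : Complex.re ⁻¹' Ioo a b ∈ 𝓝 w :=
    (isOpen_Ioo.preimage Complex.continuous_re).mem_nhds hw
  refine differentiableAt_integral_of_dominated_loc hstrip
    (.of_forall (aestronglyMeasurable_cexp_mul_smul hφ hg)) (.of_forall fun x z hz ↦ ?_)
    (ha.add hb) (.of_forall fun x ↦ by fun_prop)
  rw [norm_cexp_mul_ofReal_smul, Pi.add_apply, ← add_mul]
  exact mul_le_mul_of_nonneg_right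
    (exp_mul_le_exp_mul_add_exp_mul (Ioo_subset_Icc_self hz) _) (norm_nonneg _)

theorem integrable_cexp_mul_smul_of_le {w : ℂ} (hφ : AEMeasurable φ μ) (hg : Integrable g μ)
    (hL : ∀ᵐ x ∂μ, g x ≠ 0 → φ x ≤ L) (hw : 0 ≤ w.re) :
    Integrable (fun x ↦ Complex.exp (w * φ x) • g x) μ := by
  rw [← integrable_norm_iff (aestronglyMeasurable_cexp_mul_smul hφ hg.aestronglyMeasurable w)]
  simpa only [norm_cexp_mul_ofReal_smul] using integrable_exp_mul_mul_norm_of_le hφ hg hL hw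

theorem differentiableOn_integral_cexp_mul_smul_of_le (hφ : AEMeasurable φ μ)
    (hg : Integrable g μ) (hL : ∀ᵐ x ∂μ, g x ≠ 0 → φ x ≤ L) :
    DifferentiableOn ℂ (fun w : ℂ ↦ ∫ x, Complex.exp (w * φ x) • g x ∂μ) {w | 0 < w.re} := by
  intro w hw
  have h_int {c : ℝ} (hc : 0 ≤ c) := integrable_exp_mul_mul_norm_of_le hφ hg hL hc
  exact (differentiableAt_integral_cexp_mul_smul hφ hg.aestronglyMeasurable (h_int le_rfl)
    (h_int (add_nonneg hw.le zero_le_one)) ⟨hw, lt_add_one w.re⟩).differentiableWithinAt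

end ExponentialIntegral

section LightCone

variable {V : Type*} [NormedAddCommGroup V]

/-- The Lorentzian quadratic form `t² - ‖x‖²` of the spacetime `ℝ × V`, with signature
`(+, -, …, -)`. -/
def minkowskiSq (p : ℝ × V) : ℝ := p.1 ^ 2 - ‖p.2‖ ^ 2

variable (V) in
/-- The open solid forward light cone of the spacetime `ℝ × V`. -/
def forwardCone : Set (ℝ × V) := {p | ‖p.2‖ < p.1}

theorem minkowskiSq_pos_of_mem_forwardCone {p : ℝ × V} (hp : p ∈ forwardCone V) :
    0 < minkowskiSq p :=
  sub_pos.2 (pow_lt_pow_left₀ hp (norm_nonneg _) two_ne_zero)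

theorem log_minkowskiSq_le_of_mem_forwardCone {p : ℝ × V} {T : ℝ} (hp : p ∈ forwardCone V)
    (hT : p.1 ≤ T) : Real.log (minkowskiSq p) ≤ Real.log (T ^ 2) := by
  have htime : 0 ≤ p.1 := (norm_nonneg _).trans hp.le
  refine Real.log_le_log (minkowskiSq_pos_of_mem_forwardCone hp) ?_
  calc minkowskiSq p ≤ p.1 ^ 2 := sub_le_self _ (sq_nonneg _)
    _ ≤ T ^ 2 := by gcongr

variable [MeasurableSpace V] [OpensMeasurableSpace V]

theorem measurable_minkowskiSq : Measurable (minkowskiSq : ℝ × V → ℝ) :=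
  (measurable_fst.pow_const 2).sub (measurable_snd.norm.pow_const 2)

theorem measurableSet_forwardCone : MeasurableSet (forwardCone V) :=
  measurableSet_lt measurable_snd.norm measurable_fst

theorem exists_ae_log_minkowskiSq_le {E : Type*} [Zero E] {h : ℝ × V → E}
    (hT : BddAbove (Prod.fst '' Function.support h)) (μ : Measure (ℝ × V)) :
    ∃ L, ∀ᵐ p ∂μ.restrict (forwardCone V), h p ≠ 0 → Real.log (minkowskiSq p) ≤ L := by
  obtain ⟨T, hT⟩ := hT
  exact ⟨Real.log (T ^ 2), ae_restrict_of_forall_mem measurableSet_forwardCone fun p hp hhp ↦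
    log_minkowskiSq_le_of_mem_forwardCone hp (hT (mem_image_of_mem _ hhp))⟩

end LightCone

/-- The normalizing factor of the advanced Riesz distributions; `ν` is the spacetime dimension, but
may be any real number. -/
noncomputable def rieszNormalization (ν : ℝ) (α : ℂ) : ℂ :=
  ((π ^ (1 - ν / 2) : ℝ) : ℂ) * Complex.exp ((1 - α) * (Real.log 2 : ℂ)) /
    (Complex.Gamma (α / 2) * Complex.Gamma ((α - ν) / 2 + 1))

theorem differentiable_rieszNormalization (ν : ℝ) : Differentiable ℂ (rieszNormalization ν) := by
  unfold rieszNormalization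
  simp only [div_eq_mul_inv _ (_ * _), mul_inv]
  have hΓ {f : ℂ → ℂ} (hf : Differentiable ℂ f) :
      Differentiable ℂ fun α ↦ (Complex.Gamma (f α))⁻¹ :=
    Complex.differentiable_one_div_Gamma.comp hf
  exact (by fun_prop : Differentiable ℂ _).mul ((hΓ (by fun_prop)).mul (hΓ (by fun_prop)))

section RieszDistribution

variable {V E : Type*} [NormedAddCommGroup V] [MeasurableSpace V]
  [NormedAddCommGroup E] [NormedSpace ℂ E] {μ : Measure (ℝ × V)} {h : ℝ × V → E}

/-- The integrand `(t² - ‖x‖²) ^ ((α - ν) / 2) h(t, x)` of the advanced Riesz distribution. The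
power is written with the real logarithm, which is meaningful on the light cone only. -/
noncomputable def rieszIntegrand (ν : ℝ) (h : ℝ × V → E) (α : ℂ) (p : ℝ × V) : E :=
  Complex.exp ((α - ν) / 2 * (Real.log (minkowskiSq p) : ℂ)) • h p

/-- The advanced Riesz distribution with exponent `(α - ν) / 2` applied to `h`, where the volume
of the spacetime is replaced by an arbitrary measure `μ`. -/
noncomputable def rieszDistribution (μ : Measure (ℝ × V)) (ν : ℝ) (h : ℝ × V → E) (α : ℂ) : E :=
  rieszNormalization ν α • ∫ p in forwardCone V, rieszIntegrand ν h α p ∂μ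

theorem re_sub_ofReal_div_two (ν : ℝ) (α : ℂ) : ((α - ν) / 2).re = (α.re - ν) / 2 := by simp

variable [OpensMeasurableSpace V]

theorem integrableOn_rieszIntegrand {ν : ℝ} {α : ℂ} (h_int : IntegrableOn h (forwardCone V) μ)
    (hT : BddAbove (Prod.fst '' Function.support h)) (hα : ν ≤ α.re) :
    IntegrableOn (rieszIntegrand ν h α) (forwardCone V) μ := by
  obtain ⟨L, hL⟩ := exists_ae_log_minkowskiSq_le hT μ
  refine integrable_cexp_mul_smul_of_le measurable_minkowskiSq.log.aemeasurable h_int hL ?_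
  rw [re_sub_ofReal_div_two]
  linarith

theorem differentiableOn_integral_rieszIntegrand (ν : ℝ)
    (h_int : IntegrableOn h (forwardCone V) μ) (hT : BddAbove (Prod.fst '' Function.support h)) :
    DifferentiableOn ℂ (fun α ↦ ∫ p in forwardCone V, rieszIntegrand ν h α p ∂μ)
      {α | ν < α.re} := by
  obtain ⟨L, hL⟩ := exists_ae_log_minkowskiSq_le hT μ
  have hmaps : MapsTo (fun α : ℂ ↦ (α - ν) / 2) {α | ν < α.re} {w | 0 < w.re} := fun α hα ↦ by
    rw [mem_ofPred_eq, re_sub_ofReal_div_two]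
    exact half_pos (sub_pos.2 hα)
  exact (differentiableOn_integral_cexp_mul_smul_of_le measurable_minkowskiSq.log.aemeasurable
    h_int hL).comp (by fun_prop) hmaps

theorem riesz_distribution_holomorphic_general (ν : ℝ) (h_int : IntegrableOn h (forwardCone V) μ)
    (hT : BddAbove (Prod.fst '' Function.support h)) :
    (∀ α : ℂ, ν < α.re → IntegrableOn (rieszIntegrand ν h α) (forwardCone V) μ) ∧
      DifferentiableOn ℂ (rieszDistribution μ ν h) {α | ν < α.re} :=
  ⟨fun _ hα ↦ integrableOn_rieszIntegrand h_int hT hα.le,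
    (differentiable_rieszNormalization ν).differentiableOn.smul
      (differentiableOn_integral_rieszIntegrand ν h_int hT)⟩

end RieszDistribution

theorem riesz_distribution_holomorphic (n : ℕ) (hn : 2 ≤ n)
    (h : ℝ × EuclideanSpace ℝ (Fin (n - 1)) → ℂ)
    (hsm : ContDiff ℝ (⊤ : ℕ∞) h) (hsupp : HasCompactSupport h) :
    (∀ α : ℂ, (n : ℝ) < α.re →
      IntegrableOn
        (fun p : ℝ × EuclideanSpace ℝ (Fin (n - 1)) =>
          Complex.exp ((α - (n : ℂ)) / 2 * (Real.log (p.1 ^ 2 - ‖p.2‖ ^ 2) : ℂ)) * h p)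
        {p : ℝ × EuclideanSpace ℝ (Fin (n - 1)) | ‖p.2‖ < p.1}) ∧
    DifferentiableOn ℂ
      (fun α : ℂ =>
        ((π ^ (1 - (n : ℝ) / 2) : ℝ) : ℂ) * Complex.exp ((1 - α) * (Real.log 2 : ℂ)) /
          (Complex.Gamma (α / 2) * Complex.Gamma ((α - (n : ℂ)) / 2 + 1)) *
        ∫ p in {p : ℝ × EuclideanSpace ℝ (Fin (n - 1)) | ‖p.2‖ < p.1},
          Complex.exp ((α - (n : ℂ)) / 2 * (Real.log (p.1 ^ 2 - ‖p.2‖ ^ 2) : ℂ)) * h p)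
      {α : ℂ | (n : ℝ) < α.re} := by
  exact riesz_distribution_holomorphic_general n
    (hsm.continuous.integrable_of_hasCompactSupport hsupp).integrableOn
    ((hsupp.isCompact.image continuous_fst).bddAbove.mono (image_mono (subset_tsupport h)))
end
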